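/- arXiv:2309.11788 — 3 statements merged into one kernel-verified Lean document; each statement's English description precedes it below -/
import Mathlib

section
/- For the decreasing permutation dec_n = n(n−1)⋯1 (whose inversion graph is the complete graph on {1,…,n}), a 1-subgraph S is valid if and only if S is a non-crossing matching. Consequently, Ψ_{Sub→PF} restricts to a bijection from the set NonCross_n of non-crossing matchings on {1,…,n} onto the fibre Fib_n(dec_n). -/
/- Common definitions: the classical and MVP parking processes, parking
functions, inversion graphs and 1-subgraphs, Motzkin paths, and sandpile
configurations on complete graphs. Spots, cars and vertices are 0-indexed
(element `i : Fin n` corresponds to the 1-indexed `i+1` of the paper). -/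

namespace MVPPaper

open Finset

variable {n : ℕ}

/-- The first unoccupied spot `k ≥ s` in the occupancy `occ`, if any exists.
`occ k = some i` means spot `k` is occupied by car `i`. -/
def firstFree (occ : Fin n → Option (Fin n)) (s : Fin n) : Option (Fin n) :=
  (List.finRange n).find? fun k => decide (s ≤ k) && (occ k).isNone

/-- One step of the classical parking process: car `i`, preferring spot `s`,
parks in the first free spot `k ≥ s` (failure if none exists). -/
def classicalStep (occ : Fin n → Option (Fin n)) (i s : Fin n) :
    Option (Fin n → Option (Fin n)) :=
  (firstFree occ s).map fun k => Function.update occ k (some i)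

/-- One step of the MVP parking process: car `i` parks in its preferred spot
`s`; if `s` was occupied by an earlier car `j`, then `j` is bumped out and
drives on to the first free spot `k ≥ s` (failure if none exists). -/
def mvpStep (occ : Fin n → Option (Fin n)) (i s : Fin n) :
    Option (Fin n → Option (Fin n)) :=
  match occ s with
  | none => some (Function.update occ s (some i))
  | some j =>
      (firstFree (Function.update occ s (some i)) s).map fun k =>
        Function.update (Function.update occ s (some i)) k (some j)

/-- Run a parking process: cars `0, 1, …, n-1` enter in order, with car `i`
preferring spot `p i`. Returns the final occupancy, or `none` on failure. -/
def runProcess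
    (step : (Fin n → Option (Fin n)) → Fin n → Fin n → Option (Fin n → Option (Fin n)))
    (p : Fin n → Fin n) : Option (Fin n → Option (Fin n)) :=
  List.foldlM (fun occ i => step occ i (p i)) (fun _ => none) (List.finRange n)

def mvpRun (p : Fin n → Fin n) : Option (Fin n → Option (Fin n)) :=
  runProcess mvpStep p

def classicalRun (p : Fin n → Fin n) : Option (Fin n → Option (Fin n)) :=
  runProcess classicalStep p

/-- All cars park successfully under the MVP process. -/
def IsMVPParking (p : Fin n → Fin n) : Prop := (mvpRun p).isSome

/-- All cars park successfully under the classical process. -/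
def IsClassicalParking (p : Fin n → Fin n) : Prop := (classicalRun p).isSome

/-- `MVPOutcome p π` means that the MVP parking process for `p` succeeds, and
car `π i` finally occupies spot `i` for all `i`; that is, `O_MVP(p) = π`. -/
def MVPOutcome (p : Fin n → Fin n) (π : Equiv.Perm (Fin n)) : Prop :=
  ∃ occ, mvpRun p = some occ ∧ ∀ i, occ i = some (π i)

/-- `p` is a parking function: for every `k`, at least `k+1` cars prefer a spot
`≤ k` (the classical counting characterisation, 0-indexed). -/
def IsParkingFunction (p : Fin n → Fin n) : Prop :=
  ∀ k : Fin n, (k : ℕ) + 1 ≤ (univ.filter fun i => p i ≤ k).card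

/-- The fibre of the MVP outcome map over `π`: parking functions with MVP
outcome `π`. -/
def FibMVP (π : Equiv.Perm (Fin n)) : Set (Fin n → Fin n) :=
  {p | IsParkingFunction p ∧ MVPOutcome p π}

/-- The set of inversions of `π` (where `π i` is the car occupying spot `i`):
pairs `(j, i)` with `j < i` and `π j > π i`. These are the edges of the
inversion graph `G_π`. -/
def invFinset (π : Equiv.Perm (Fin n)) : Finset (Fin n × Fin n) :=
  univ.filter fun e => e.1 < e.2 ∧ π e.2 < π e.1

/-- The left-inversions of `π` at `i`. -/
def lInv (π : Equiv.Perm (Fin n)) (i : Fin n) : Finset (Fin n) :=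
  univ.filter fun j => j < i ∧ π i < π j

/-- A 1-subgraph of the inversion graph of `π`: a set of inversions with at
most one incident left-arc at each vertex. -/
def IsOneSubgraph (π : Equiv.Perm (Fin n)) (S : Finset (Fin n × Fin n)) : Prop :=
  S ⊆ invFinset π ∧ ∀ i j j' : Fin n, (j, i) ∈ S → (j', i) ∈ S → j = j'

/-- The map `Ψ_{Sub→PF}`: the parking preference `p` where `p (π i) = j` if
`(j, i) ∈ S` (for the unique such `j`), and `p (π i) = i` otherwise. -/
noncomputable def subToPF (π : Equiv.Perm (Fin n)) (S : Finset (Fin n × Fin n)) :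
    Fin n → Fin n := fun c =>
  if h : ∃ j, (j, π.symm c) ∈ S then h.choose else π.symm c

/-- The map `Ψ_{PF→Sub}`: the set of inversions `(j, i)` of `π` with
`p (π i) = j`. -/
def pfToSub (π : Equiv.Perm (Fin n)) (p : Fin n → Fin n) : Finset (Fin n × Fin n) :=
  (invFinset π).filter fun e => p (π e.2) = e.1

/-- A 1-subgraph `S` is valid if the MVP outcome of `Ψ_{Sub→PF}(S)` is `π`. -/
def IsValid (π : Equiv.Perm (Fin n)) (S : Finset (Fin n × Fin n)) : Prop :=
  MVPOutcome (subToPF π S) π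

/-- `π` contains the pattern `321`. -/
def Contains321 (π : Equiv.Perm (Fin n)) : Prop :=
  ∃ i j k : Fin n, i < j ∧ j < k ∧ π k < π j ∧ π j < π i

/-- `π` contains the pattern `3412`. -/
def Contains3412 (π : Equiv.Perm (Fin n)) : Prop :=
  ∃ i j k l : Fin n, i < j ∧ j < k ∧ k < l ∧ π k < π l ∧ π l < π i ∧ π i < π j

/-- `S` is `P⃗₂`-free: there is no triple `i < j < k` with `(i,j) ∈ S` and
`(j,k) ∈ S`. -/
def P2Free (S : Finset (Fin n × Fin n)) : Prop :=
  ¬∃ i j k : Fin n, i < j ∧ j < k ∧ (i, j) ∈ S ∧ (j, k) ∈ S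

/-- `S` is horizontally separated (HS): any two distinct edges `(j,i)` and
`(j',i')` of `S` satisfy `i < j'` or `i' < j`. -/
def IsHS (S : Finset (Fin n × Fin n)) : Prop :=
  ∀ e ∈ S, ∀ e' ∈ S, e ≠ e' → e.2 < e'.1 ∨ e'.2 < e.1

/-- Steps of a Motzkin path: up, horizontal, down. -/
inductive MStep : Type
  | U : MStep
  | H : MStep
  | D : MStep
  deriving DecidableEq

/-- The height change of a step. -/
def stepVal : MStep → ℤ
  | MStep.U => 1
  | MStep.H => 0
  | MStep.D => -1

/-- The number of cars preferring spot `j` in `p`. -/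
def prefCount (p : Fin n → Fin n) (j : Fin n) : ℕ :=
  (univ.filter fun i => p i = j).card

/-- The lattice path `Φ(p)`: step `j` is `U`, `H` or `D` according to whether
spot `j` is preferred by at least two, exactly one, or no cars. -/
def Phi (p : Fin n → Fin n) : Fin n → MStep := fun j =>
  if 2 ≤ prefCount p j then MStep.U
  else if prefCount p j = 1 then MStep.H
  else MStep.D

/-- An `n`-step lattice path is a Motzkin path: it ends at height `0` and no
prefix goes below height `0`. -/
def IsMotzkinPath (φ : Fin n → MStep) : Prop :=
  (∑ j : Fin n, stepVal (φ j)) = 0 ∧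
  ∀ k : Fin n, 0 ≤ ∑ j ∈ univ.filter (fun j : Fin n => j ≤ k), stepVal (φ j)

/-- The decreasing permutation `dec_n = n(n-1)⋯1`: spot `i` gets car `n-1-i`
(0-indexed). -/
def decPerm (n : ℕ) : Equiv.Perm (Fin n) :=
  ⟨Fin.rev, Fin.rev, Fin.rev_rev, Fin.rev_rev⟩

/-- A non-crossing matching arc diagram on `{0, …, n-1}`: arcs go left to
right, each vertex is incident to at most one arc, and no two arcs cross. -/
def IsNonCrossMatching (S : Finset (Fin n × Fin n)) : Prop :=
  (∀ e ∈ S, e.1 < e.2) ∧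
  (∀ e ∈ S, ∀ e' ∈ S, e ≠ e' →
    e.1 ≠ e'.1 ∧ e.1 ≠ e'.2 ∧ e.2 ≠ e'.1 ∧ e.2 ≠ e'.2) ∧
  ¬∃ i j k l : Fin n, i < j ∧ j < k ∧ k < l ∧ (i, k) ∈ S ∧ (j, l) ∈ S

/-- A stable configuration `c` (grain counts, each `< n`) on the complete graph
`K_n` is recurrent; by Dhar's burning criterion this amounts on `K_n` to the
existence of an ordering `v` of the vertices with `c (v k) ≥ n - (k+1)` for
every `k` (0-indexed). -/
def IsRecurrentK (c : Fin n → ℕ) : Prop :=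
  (∀ i, c i < n) ∧ ∃ v : Equiv.Perm (Fin n), ∀ k : Fin n, n ≤ c (v k) + (k : ℕ) + 1

/-!
A car that enters leaves its preferred spot only to the right, and only because a later car takes
over. Hence, if the outcome of `p` is `π`, a car that does not prefer its final spot prefers a spot
whose final owner enters after it: this is an inversion of `π`, so `Ψ_{PF→Sub}` inverts `Ψ_{Sub→PF}`
on the fibre of `π`, and the valid 1-subgraphs are in bijection with that fibre.

For `dec_n` the crucial point is that a car bumps another one only when it enters its own final
spot. Consider the last car `t` violating this, and let `k` be the spot to which it sends the bumped
car `b`. The final spot of `t` is reserved and still free, so `k` lies to the left of it. By the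
choice of `t`, both `t` and `b` then wait until the owner of `k` arrives and sends `b` to its final
spot, which is at most the free final spot of `t`. But `b` entered before `t`, so its final spot is
further to the right.

So every car waits at its preferred spot until the owner of that spot arrives, and then goes
straight to its final spot. This is possible exactly when the arcs from preferred to final spots
form a non-crossing matching.
-/

section Fold

variable {α β : Type*} {f : β → α → Option β}

theorem foldlM_eq_some_iff_exists_seq {l : List α} {a b : β} :
    l.foldlM f a = some b ↔ ∃ o : ℕ → β, o 0 = a ∧
      (∀ t (h : t < l.length), f (o t) l[t] = some (o (t + 1))) ∧ o l.length = b := by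
  induction l generalizing a with
  | nil =>
    constructor
    · intro h
      exact ⟨fun _ => a, rfl, by simp, by simpa using h⟩
    · rintro ⟨o, rfl, -, rfl⟩
      rfl
  | cons x l ih =>
    simp only [List.foldlM_cons, Option.bind_eq_bind, Option.bind_eq_some_iff, ih]
    constructor
    · rintro ⟨_, hx, o, rfl, hstep, rfl⟩
      refine ⟨fun t => Nat.casesOn t a o, rfl, fun t ht => ?_, rfl⟩
      cases t with
      | zero => exact hx
      | succ t => exact hstep t (by simpa using ht)
    · rintro ⟨o, rfl, hstep, rfl⟩
      exact ⟨o 1, hstep 0 (by simp), fun t => o (t + 1), rfl,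
        fun t ht => hstep (t + 1) (by simpa using ht), rfl⟩

theorem exists_foldlM_eq_some_of_invariant {l : List α} {P : ℕ → β → Prop} {a : β} (zero : P 0 a)
    (succ : ∀ t (h : t < l.length) b, P t b → ∃ b', f b l[t] = some b' ∧ P (t + 1) b') :
    ∃ b, l.foldlM f a = some b ∧ P l.length b := by
  induction l generalizing a P with
  | nil => exact ⟨a, rfl, zero⟩
  | cons x l ih =>
    obtain ⟨a', hx, ha'⟩ := succ 0 (by simp) a zero
    obtain ⟨b, hb, hP⟩ := ih (P := fun t => P (t + 1)) ha'
      fun t ht => succ (t + 1) (by simpa using ht)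
    have hx : f a x = some a' := hx
    exact ⟨b, by simp only [List.foldlM_cons, hx, Option.bind_eq_bind, Option.bind_some, hb], hP⟩

end Fold

section Step

variable {occ occ' : Fin n → Option (Fin n)} {i s k : Fin n}

theorem firstFree_eq_some_iff :
    firstFree occ s = some k ↔ s ≤ k ∧ occ k = none ∧ ∀ x, s ≤ x → occ x = none → k ≤ x := by
  simp only [firstFree, List.find?_eq_some_iff_getElem, Bool.and_eq_true, decide_eq_true_eq,
    Option.isNone_iff_eq_none, List.getElem_finRange, List.length_finRange]
  constructor
  · rintro ⟨⟨hsk, hk⟩, _, _, rfl, hmin⟩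
    refine ⟨hsk, hk, fun x hsx hx => not_lt.1 fun hxk => ?_⟩
    simpa [hsx, hx] using hmin x.1 hxk
  · rintro ⟨hsk, hk, hmin⟩
    refine ⟨⟨hsk, hk⟩, k.1, k.2, rfl, fun x hxk => ?_⟩
    have hx := fun hsx hx => (hmin ⟨x, hxk.trans k.2⟩ hsx hx).not_gt hxk
    simpa [Option.ne_none_iff_isSome, imp_iff_not_or] using hx

theorem mvpStep_of_eq_none (hs : occ s = none) :
    mvpStep occ i s = some (Function.update occ s (some i)) := by
  simp [mvpStep, hs]

theorem mvpStep_eq_some_iff_of_eq_some {j : Fin n} (hs : occ s = some j) :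
    mvpStep occ i s = some occ' ↔ ∃ k, s < k ∧ occ k = none ∧
      (∀ x, s < x → occ x = none → k ≤ x) ∧
      occ' = Function.update (Function.update occ s (some i)) k (some j) := by
  have hfree : ∀ x, s ≤ x ∧ Function.update occ s (some i) x = none ↔ s < x ∧ occ x = none := by
    intro x
    rcases eq_or_ne x s with rfl | hx
    · simp
    · simp [hx, lt_iff_le_and_ne, hx.symm]
  simp only [mvpStep, hs, Option.map_eq_some_iff, firstFree_eq_some_iff]
  grind

theorem apply_pref_of_mvpStep (h : mvpStep occ i s = some occ') : occ' s = some i := by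
  cases hs : occ s with
  | none =>
    rw [mvpStep_of_eq_none hs, Option.some_inj] at h
    simp [← h]
  | some j =>
    obtain ⟨k, hsk, -, -, rfl⟩ := (mvpStep_eq_some_iff_of_eq_some hs).1 h
    simp [hsk.ne]

theorem apply_eq_of_mvpStep_of_ne (h : mvpStep occ i s = some occ') {x c : Fin n} (hx : x ≠ s)
    (hc : occ x = some c) : occ' x = some c := by
  cases hs : occ s with
  | none =>
    rw [mvpStep_of_eq_none hs, Option.some_inj] at h
    simp [← h, hx, hc]
  | some j =>
    obtain ⟨k, -, hk, -, rfl⟩ := (mvpStep_eq_some_iff_of_eq_some hs).1 h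
    have hxk : x ≠ k := by rintro rfl; simp [hk] at hc
    simp [hx, hxk, hc]

theorem exists_bump_of_mvpStep (h : mvpStep occ i s = some occ') {j : Fin n}
    (hs : occ s = some j) :
    ∃ k, s < k ∧ occ k = none ∧ (∀ x, s < x → occ x = none → k ≤ x) ∧ occ' k = some j := by
  obtain ⟨k, hsk, hk, hmin, rfl⟩ := (mvpStep_eq_some_iff_of_eq_some hs).1 h
  exact ⟨k, hsk, hk, hmin, by simp⟩

theorem eq_or_parked_of_mvpStep (h : mvpStep occ i s = some occ') {x c : Fin n}
    (hc : occ' x = some c) : c = i ∨ ∃ y, occ y = some c := by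
  cases hs : occ s with
  | none =>
    rw [mvpStep_of_eq_none hs, Option.some_inj] at h
    subst h
    grind [Function.update_apply]
  | some j =>
    obtain ⟨k, -, -, -, rfl⟩ := (mvpStep_eq_some_iff_of_eq_some hs).1 h
    grind [Function.update_apply]

end Step

/-- A complete history of the MVP process for the preferences `p` ending in the permutation `π`:
`o t` is the occupancy just before car `t` enters. Only the values of `o` at `0, …, n` matter. -/
structure IsMVPRun (p : Fin n → Fin n) (π : Equiv.Perm (Fin n))
    (o : ℕ → Fin n → Option (Fin n)) : Prop where
  zero : ∀ x, o 0 x = none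
  step : ∀ t : Fin n, mvpStep (o t) t (p t) = some (o (t + 1))
  final : ∀ x, o n x = some (π x)

theorem mvpOutcome_iff_exists_isMVPRun {p : Fin n → Fin n} {π : Equiv.Perm (Fin n)} :
    MVPOutcome p π ↔ ∃ o, IsMVPRun p π o := by
  simp only [MVPOutcome, mvpRun, runProcess, foldlM_eq_some_iff_exists_seq, List.length_finRange,
    List.getElem_finRange]
  constructor
  · rintro ⟨_, ⟨o, zero, step, rfl⟩, final⟩
    exact ⟨o, congrFun zero, fun t => step t t.2, final⟩
  · rintro ⟨o, zero, step, final⟩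
    exact ⟨o n, ⟨o, funext zero, fun t ht => step ⟨t, ht⟩, rfl⟩, final⟩

namespace IsMVPRun

variable {p : Fin n → Fin n} {π : Equiv.Perm (Fin n)} {o : ℕ → Fin n → Option (Fin n)}

theorem apply_pref (H : IsMVPRun p π o) (t : Fin n) : o (t + 1) (p t) = some t :=
  apply_pref_of_mvpStep (H.step t)

theorem apply_succ_of_ne (H : IsMVPRun p π o) {t x c : Fin n} (hx : x ≠ p t)
    (hc : o t x = some c) : o (t + 1) x = some c :=
  apply_eq_of_mvpStep_of_ne (H.step t) hx hc

theorem lt_of_apply_eq_some (H : IsMVPRun p π o) {t : ℕ} (ht : t ≤ n) {x c : Fin n}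
    (hc : o t x = some c) : (c : ℕ) < t := by
  induction t generalizing x with
  | zero => simp [H.zero] at hc
  | succ t ih =>
    rcases eq_or_parked_of_mvpStep (H.step ⟨t, ht⟩) hc with rfl | ⟨y, hy⟩
    · exact t.lt_succ_self
    · exact (ih (Nat.le_of_succ_le ht) hy).trans t.lt_succ_self

theorem apply_injective (H : IsMVPRun p π o) {t : ℕ} (ht : t ≤ n) {x y c : Fin n}
    (hx : o t x = some c) (hy : o t y = some c) : x = y := by
  induction ht using Nat.decreasingInduction generalizing x y with
  | self =>
    rw [H.final, Option.some_inj] at hx hy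
    exact π.injective (hx.trans hy.symm)
  | of_succ t ht ih =>
    have bumped_twice {x y : Fin n} (hxp : x = p ⟨t, ht⟩) (hyp : y ≠ p ⟨t, ht⟩)
        (hx : o t x = some c) (hy : o t y = some c) : False := by
      obtain ⟨k, -, hk, -, hkc⟩ := exists_bump_of_mvpStep (H.step ⟨t, ht⟩) (hxp ▸ hx)
      have hky : k = y := ih hkc (H.apply_succ_of_ne (t := ⟨t, ht⟩) hyp hy)
      simp [← hky, hk] at hy
    by_cases hxp : x = p ⟨t, ht⟩ <;> by_cases hyp : y = p ⟨t, ht⟩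
    · rw [hxp, hyp]
    · exact (bumped_twice hxp hyp hx hy).elim
    · exact (bumped_twice hyp hxp hy hx).elim
    · exact ih (H.apply_succ_of_ne (t := ⟨t, ht⟩) hxp hx)
        (H.apply_succ_of_ne (t := ⟨t, ht⟩) hyp hy)

/-- Only a car entering at time `t` or later can still displace the occupant of a spot. -/
theorem apply_eq_final_of_lt (H : IsMVPRun p π o) {t : ℕ} (ht : t ≤ n) {x c : Fin n}
    (hc : o t x = some c) (hx : (π x : ℕ) < t) : c = π x := by
  induction ht using Nat.decreasingInduction generalizing c with
  | self => simpa [H.final, eq_comm] using hc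
  | of_succ t ht ih =>
    by_cases hxp : x = p ⟨t, ht⟩
    · have : ⟨t, ht⟩ = π x := ih (hxp ▸ H.apply_pref ⟨t, ht⟩) (by omega)
      simp [← this] at hx
    · exact ih (H.apply_succ_of_ne (t := ⟨t, ht⟩) hxp hc) (by omega)

theorem le_symm_of_apply_eq_some (H : IsMVPRun p π o) {t : ℕ} (ht : t ≤ n) {x c : Fin n}
    (hc : o t x = some c) : x ≤ π.symm c := by
  induction ht using Nat.decreasingInduction generalizing x with
  | self =>
    rw [H.final, Option.some_inj] at hc
    simp [← hc]
  | of_succ t ht ih =>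
    by_cases hxp : x = p ⟨t, ht⟩
    · obtain ⟨k, hk, -, -, hkc⟩ := exists_bump_of_mvpStep (H.step ⟨t, ht⟩) (hxp ▸ hc)
      exact hxp.le.trans (hk.le.trans (ih hkc))
    · exact ih (H.apply_succ_of_ne (t := ⟨t, ht⟩) hxp hc)

theorem pref_le_symm (H : IsMVPRun p π o) (c : Fin n) : p c ≤ π.symm c :=
  H.le_symm_of_apply_eq_some c.2 (H.apply_pref c)

theorem lt_final_pref (H : IsMVPRun p π o) {c : Fin n} (hc : p c ≠ π.symm c) : c < π (p c) := by
  by_contra! hle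
  have := H.apply_eq_final_of_lt c.2 (H.apply_pref c) (Nat.lt_succ_of_le hle)
  exact hc (π.symm_apply_eq.2 this).symm

theorem apply_symm_eq_none (H : IsMVPRun p π o) {t : ℕ} (ht : t ≤ n) {x c : Fin n}
    (hc : o t x = some c) (hx : x ≠ π.symm c) : o t (π.symm c) = none := by
  by_contra hne
  obtain ⟨d, hd⟩ := Option.ne_none_iff_exists'.1 hne
  have hdc : d = c := by
    simpa using H.apply_eq_final_of_lt ht hd (by simpa using H.lt_of_apply_eq_some ht hc)
  exact hx (H.apply_injective ht hc (hdc ▸ hd))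

theorem pref_final_eq_of_occupied (H : IsMVPRun p π o) {x c : Fin n} (hc : o (π x) x = some c) :
    p (π x) = x := by
  by_contra hne
  have hcx : c = π x :=
    H.apply_eq_final_of_lt (π x).2 (H.apply_succ_of_ne (Ne.symm hne) hc) (Nat.lt_succ_self _)
  exact (H.lt_of_apply_eq_some (π x).2.le hc).ne (congrArg Fin.val hcx)

end IsMVPRun

theorem isParkingFunction_of_forall_le {p : Fin n → Fin n} {π : Equiv.Perm (Fin n)}
    (h : ∀ c, p c ≤ π.symm c) : IsParkingFunction p := by
  intro k
  have hsub : (Iic k).map π.toEmbedding ⊆ univ.filter fun c => p c ≤ k := by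
    intro c hc
    obtain ⟨x, hx, rfl⟩ := mem_map.1 hc
    exact mem_filter.2 ⟨mem_univ _, (h (π x)).trans (by simpa using hx)⟩
  simpa using card_le_card hsub

section Subgraph

variable {π : Equiv.Perm (Fin n)} {S : Finset (Fin n × Fin n)} {p : Fin n → Fin n} {i j : Fin n}

theorem mem_invFinset : (j, i) ∈ invFinset π ↔ j < i ∧ π i < π j := by
  simp [invFinset]

theorem mem_pfToSub : (j, i) ∈ pfToSub π p ↔ (j, i) ∈ invFinset π ∧ p (π i) = j := by
  simp [pfToSub]

theorem isOneSubgraph_pfToSub : IsOneSubgraph π (pfToSub π p) :=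
  ⟨filter_subset _ _, fun _ _ _ h h' => (mem_pfToSub.1 h).2.symm.trans (mem_pfToSub.1 h').2⟩

theorem IsOneSubgraph.lt (hS : IsOneSubgraph π S) (h : (j, i) ∈ S) : j < i :=
  (mem_invFinset.1 (hS.1 h)).1

theorem subToPF_eq_of_mem (hS : IsOneSubgraph π S) (h : (j, i) ∈ S) : subToPF π S (π i) = j := by
  have hex : ∃ j, (j, π.symm (π i)) ∈ S := ⟨j, by simpa using h⟩
  rw [subToPF, dif_pos hex]
  exact hS.2 i _ _ (by simpa using hex.choose_spec) h

theorem subToPF_eq_self_of_forall_notMem (h : ∀ j, (j, i) ∉ S) : subToPF π S (π i) = i := by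
  simp [subToPF, h]

theorem mem_iff_subToPF_eq (hS : IsOneSubgraph π S) :
    (j, i) ∈ S ↔ j < i ∧ subToPF π S (π i) = j := by
  refine ⟨fun h => ⟨hS.lt h, subToPF_eq_of_mem hS h⟩, fun ⟨hlt, heq⟩ => ?_⟩
  by_cases hex : ∃ j', (j', i) ∈ S
  · obtain ⟨j', hj'⟩ := hex
    rwa [← heq, subToPF_eq_of_mem hS hj']
  · rw [subToPF_eq_self_of_forall_notMem (not_exists.1 hex)] at heq
    exact (hlt.ne' heq).elim

theorem subToPF_apply_le (hS : IsOneSubgraph π S) (i : Fin n) : subToPF π S (π i) ≤ i := by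
  by_cases hex : ∃ j, (j, i) ∈ S
  · obtain ⟨j, hj⟩ := hex
    exact (subToPF_eq_of_mem hS hj).trans_le (hS.lt hj).le
  · exact (subToPF_eq_self_of_forall_notMem (not_exists.1 hex)).le

theorem pfToSub_subToPF (hS : IsOneSubgraph π S) : pfToSub π (subToPF π S) = S := by
  ext ⟨j, i⟩
  rw [mem_pfToSub]
  exact ⟨fun ⟨hinv, heq⟩ => (mem_iff_subToPF_eq hS).2 ⟨(mem_invFinset.1 hinv).1, heq⟩,
    fun h => ⟨hS.1 h, subToPF_eq_of_mem hS h⟩⟩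

theorem subToPF_pfToSub (h : ∀ i, p (π i) = i ∨ (p (π i), i) ∈ invFinset π) :
    subToPF π (pfToSub π p) = p := by
  refine funext (π.surjective.forall.2 fun i => ?_)
  rcases h i with hi | hi
  · rw [hi]
    refine subToPF_eq_self_of_forall_notMem fun j hj => ?_
    have hij : i = j := hi.symm.trans (mem_pfToSub.1 hj).2
    exact (isOneSubgraph_pfToSub.lt hj).ne' hij
  · exact subToPF_eq_of_mem isOneSubgraph_pfToSub (mem_pfToSub.2 ⟨hi, rfl⟩)

theorem subToPF_pfToSub_of_mvpOutcome (h : MVPOutcome p π) : subToPF π (pfToSub π p) = p := by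
  obtain ⟨o, H⟩ := mvpOutcome_iff_exists_isMVPRun.1 h
  refine subToPF_pfToSub fun i => or_iff_not_imp_left.2 fun hi => mem_invFinset.2 ⟨?_, ?_⟩
  · exact lt_of_le_of_ne (by simpa using H.pref_le_symm (π i)) hi
  · exact H.lt_final_pref (by simpa using hi)

theorem isParkingFunction_of_mvpOutcome (h : MVPOutcome p π) : IsParkingFunction p :=
  let ⟨_, H⟩ := mvpOutcome_iff_exists_isMVPRun.1 h
  isParkingFunction_of_forall_le H.pref_le_symm

theorem bijOn_subToPF (π : Equiv.Perm (Fin n)) :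
    Set.BijOn (subToPF π) {S | IsOneSubgraph π S ∧ IsValid π S} (FibMVP π) := by
  refine Set.InvOn.bijOn (f' := pfToSub π)
    ⟨fun S hS => pfToSub_subToPF hS.1, fun p hp => subToPF_pfToSub_of_mvpOutcome hp.2⟩
    (fun S hS => ⟨isParkingFunction_of_mvpOutcome hS.2, hS.2⟩)
    (fun p hp => ⟨isOneSubgraph_pfToSub, ?_⟩)
  rw [IsValid, subToPF_pfToSub_of_mvpOutcome hp.2]
  exact hp.2

theorem isNonCrossMatching_iff_forall_lt_or_lt (hS : IsOneSubgraph π S) :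
    IsNonCrossMatching S ↔ ∀ j i j' i', (j, i) ∈ S → (j', i') ∈ S → i' < i → j < j' ∨ i' < j := by
  constructor
  · rintro ⟨-, hmatch, hcross⟩ j i j' i' h h' hlt
    have hne := hmatch _ h _ h' (by simp [hlt.ne'])
    by_contra! hbetween
    exact hcross ⟨j', j, i', i, hbetween.1.lt_of_ne hne.1.symm, hbetween.2.lt_of_ne hne.2.1, hlt,
      h', h⟩
  · intro hS'
    refine ⟨fun _ => hS.lt, ?_, ?_⟩
    · rintro ⟨j, i⟩ h ⟨j', i'⟩ h' hne
      have hji := hS.lt h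
      have hji' := hS.lt h'
      rcases lt_trichotomy i i' with hlt | rfl | hlt
      · have := hS' _ _ _ _ h' h hlt
        dsimp only
        omega
      · exact (hne (by rw [hS.2 _ _ _ h h'])).elim
      · have := hS' _ _ _ _ h h' hlt
        dsimp only
        omega
    · rintro ⟨i, j, k, l, hij, hjk, hkl, hik, hjl⟩
      have := hS' _ _ _ _ hjl hik hkl
      omega

end Subgraph

/-- The preference-side form of a non-crossing matching: car `c`, whose spot in `dec_n` is `c.rev`,
contributes the arc from `p c` to `c.rev`, or no arc when these coincide. A nontrivial arc of a
later car, whose right end is further to the left, must avoid the left end of every earlier one. -/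
structure IsNonCrossPref (p : Fin n → Fin n) : Prop where
  le_rev : ∀ c, p c ≤ c.rev
  lt_or_lt : ∀ c c', c < c' → p c' < c'.rev → p c < p c' ∨ c'.rev < p c

namespace IsMVPRun

variable {p : Fin n → Fin n} {o : ℕ → Fin n → Option (Fin n)}

theorem apply_eq_rev_of_lt (H : IsMVPRun p (decPerm n) o) {t : ℕ} (ht : t ≤ n) {x c : Fin n}
    (hc : o t x = some c) (hx : (x.rev : ℕ) < t) : x = c.rev :=
  Fin.rev_eq_iff.1 (H.apply_eq_final_of_lt ht hc hx).symm

/-- Car `x.rev` enters at its own final spot and bumps `c` to the first free spot. The owner of that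
spot has already entered, so `c` never moves again. -/
theorem rev_le_of_apply_eq_none (H : IsMVPRun p (decPerm n) o) {x y c : Fin n}
    (hc : o x.rev x = some c) (hxy : x < y) (hy : o x.rev y = none) : c.rev ≤ y := by
  have hpref : p x.rev = x := H.pref_final_eq_of_occupied hc
  obtain ⟨k, hxk, -, hmin, hkc⟩ := exists_bump_of_mvpStep (H.step x.rev) (by rwa [hpref])
  rw [hpref] at hxk hmin
  have hkx : k.rev < x.rev := Fin.rev_lt_rev.2 hxk
  rw [← H.apply_eq_rev_of_lt x.rev.2 hkc (Nat.lt_succ_of_lt hkx)]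
  exact hmin y hxy hy

theorem le_of_nested (H : IsMVPRun p (decPerm n) o) {x y a b : Fin n}
    (ha : o x.rev y = some a) (hb : o x.rev x = some b) (hya : y ≠ a.rev) (hxa : x < a.rev) :
    a ≤ b :=
  Fin.rev_le_rev.1 <|
    H.rev_le_of_apply_eq_none hb hxa (H.apply_symm_eq_none x.rev.2.le ha hya)

theorem apply_eq_of_le_rev (H : IsMVPRun p (decPerm n) o) {t u : ℕ} (htu : t ≤ u) {x c : Fin n}
    (hu : u ≤ x.rev)
    (hbump : ∀ v : Fin n, t ≤ v → o v (p v) ≠ none → p v = v.rev) (hc : o t x = some c) :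
    o u x = some c := by
  induction u, htu using Nat.le_induction with
  | base => exact hc
  | succ u htu ih =>
    have hux := ih (Nat.le_of_succ_le hu)
    have hun : u < n := by omega
    refine H.apply_succ_of_ne (t := ⟨u, hun⟩) (fun hxp => ?_) hux
    have hrev : x = Fin.rev ⟨u, hun⟩ := hxp.trans (hbump ⟨u, hun⟩ htu (by simp [← hxp, hux]))
    rw [hrev, Fin.rev_rev] at hu
    exact Nat.not_succ_le_self u hu

theorem pref_eq_rev_of_occupied (H : IsMVPRun p (decPerm n) o) {t : Fin n}
    (ht : o t (p t) ≠ none) : p t = t.rev := by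
  induction t using WellFoundedGT.induction with
  | ind t ih =>
  by_contra hne
  obtain ⟨b, hb⟩ := Option.ne_none_iff_exists'.1 ht
  obtain ⟨k, hpk, -, hmin, hkb⟩ := exists_bump_of_mvpStep (H.step t) hb
  have hbt : b < t := H.lt_of_apply_eq_some t.2.le hb
  have hrev_free_succ : o (t + 1) t.rev = none := H.apply_symm_eq_none t.2 (H.apply_pref t) hne
  have hrev_free : o t t.rev = none := by
    by_contra hocc
    obtain ⟨d, hd⟩ := Option.ne_none_iff_exists'.1 hocc
    simp [H.apply_succ_of_ne (Ne.symm hne) hd] at hrev_free_succ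
  have hk_lt : k < t.rev := by
    refine (hmin _ ((H.pref_le_symm t).lt_of_ne hne) hrev_free).lt_of_ne ?_
    rintro rfl
    exact Option.some_ne_none _ (hkb.symm.trans hrev_free_succ)
  have htk : t < k.rev := Fin.lt_rev_iff.1 hk_lt
  -- After `t`, an occupied spot is only taken over by its final owner, and the final owners of the
  -- spots up to `k` do not enter before time `k.rev`.
  have persists {x c : Fin n} (hx : x ≤ k) (hc : o (t + 1) x = some c) : o k.rev x = some c :=
    H.apply_eq_of_le_rev htk (Fin.rev_le_rev.2 hx) (fun v hv => ih v hv) hc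
  exact hbt.not_ge <|
    H.le_of_nested (persists hpk.le (H.apply_pref t)) (persists le_rfl hkb) hne hk_lt

theorem apply_pref_eq_of_le_rev (H : IsMVPRun p (decPerm n) o) {t : ℕ} {c : Fin n}
    (hct : (c : ℕ) < t) (ht : t ≤ (p c).rev) : o t (p c) = some c :=
  H.apply_eq_of_le_rev hct ht (fun _ _ => H.pref_eq_rev_of_occupied) (H.apply_pref c)

theorem isNonCrossPref (H : IsMVPRun p (decPerm n) o) : IsNonCrossPref p := by
  refine ⟨H.pref_le_symm, fun c c' hcc' hc' => ?_⟩
  by_contra! hbetween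
  obtain ⟨hle, hle'⟩ := hbetween
  have hc'_le : c' ≤ (p c).rev := Fin.le_rev_iff.1 hle'
  have hocc : o c' (p c) = some c := H.apply_pref_eq_of_le_rev hcc' hc'_le
  have hne : p c' ≠ p c := fun heq =>
    hc'.ne (H.pref_eq_rev_of_occupied (by simp [heq, hocc]))
  have hne' : p c ≠ c'.rev := by
    intro heq
    rw [heq] at hocc
    have hpref := H.pref_final_eq_of_occupied (x := c'.rev) (by simpa [decPerm] using hocc)
    exact hc'.ne (by simpa [decPerm] using hpref)
  have hlt : c' < (p c).rev := Fin.lt_rev_iff.1 (hle'.lt_of_ne hne')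
  exact hcc'.not_ge <| H.le_of_nested
    (H.apply_pref_eq_of_le_rev hlt (Fin.rev_le_rev.2 hle))
    (H.apply_pref_eq_of_le_rev (hcc'.trans hlt) le_rfl) hc'.ne (hle'.lt_of_ne hne')

end IsMVPRun

/-- The occupancy `occ` in which precisely the cars `c < t` are parked, car `c` in spot `σ c`. -/
def IsPlacement (σ : Fin n → Fin n) (t : ℕ) (occ : Fin n → Option (Fin n)) : Prop :=
  ∀ x c, occ x = some c ↔ (c : ℕ) < t ∧ σ c = x

namespace IsPlacement

variable {σ σ' : Fin n → Fin n} {t : Fin n} {occ : Fin n → Option (Fin n)}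

theorem apply_eq_none_iff {t : ℕ} (h : IsPlacement σ t occ) {x : Fin n} :
    occ x = none ↔ ∀ c : Fin n, (c : ℕ) < t → σ c ≠ x := by
  simp [Option.eq_none_iff_forall_ne_some, h x]

theorem update_of_park (h : IsPlacement σ t occ) (hfree : occ (σ' t) = none)
    (hσ : ∀ c < t, σ' c = σ c) :
    IsPlacement σ' (t + 1) (Function.update occ (σ' t) (some t)) := by
  rw [h.apply_eq_none_iff] at hfree
  intro x c
  have := h x c
  grind [Function.update_apply]

theorem update_of_bump (h : IsPlacement σ t occ) {j : Fin n} (hj : occ (σ' t) = some j)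
    (hfree : occ (σ' j) = none) (hσ : ∀ c < t, c ≠ j → σ' c = σ c) :
    IsPlacement σ' (t + 1)
      (Function.update (Function.update occ (σ' t) (some t)) (σ' j) (some j)) := by
  have hj' := (h _ _).1 hj
  rw [h.apply_eq_none_iff] at hfree
  intro x c
  have := h x c
  have := h (σ' t) c
  grind [Function.update_apply]

end IsPlacement

/-- The position of car `c` just before car `t` enters: its preferred spot until the final owner
of that spot has arrived, its final spot in `dec_n` from then on. -/
def spotAt (p : Fin n → Fin n) (t : ℕ) (c : Fin n) : Fin n :=
  if t ≤ (p c).rev then p c else c.rev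

namespace IsNonCrossPref

variable {p : Fin n → Fin n} {t c j : Fin n} {occ : Fin n → Option (Fin n)}

theorem spotAt_succ_self (hp : IsNonCrossPref p) : spotAt p (t + 1) t = p t := by
  have := hp.le_rev t
  grind [spotAt]

theorem spotAt_succ_of_ne (hc : p c ≠ t.rev) : spotAt p (t + 1) c = spotAt p t c := by
  grind [spotAt]

theorem exists_mvpStep_of_forall_ne (hp : IsNonCrossPref p) (hocc : IsPlacement (spotAt p t) t occ)
    (hne : ∀ c < t, p c ≠ t.rev) :
    ∃ occ', mvpStep occ t (p t) = some occ' ∧ IsPlacement (spotAt p (t + 1)) (t + 1) occ' := by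
  have hfree : occ (p t) = none := by
    refine hocc.apply_eq_none_iff.2 fun c hct hc => ?_
    have := hp.lt_or_lt c t hct
    have := hp.le_rev t
    grind [spotAt]
  refine ⟨_, mvpStep_of_eq_none hfree, ?_⟩
  rw [← hp.spotAt_succ_self] at hfree ⊢
  exact hocc.update_of_park hfree fun c hc => spotAt_succ_of_ne (hne c hc)

theorem exists_mvpStep_of_pref_eq_rev (hp : IsNonCrossPref p)
    (hocc : IsPlacement (spotAt p t) t occ) (hjt : j < t) (hj : p j = t.rev) :
    ∃ occ', mvpStep occ t (p t) = some occ' ∧ IsPlacement (spotAt p (t + 1)) (t + 1) occ' := by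
  have hpt : p t = t.rev := by
    have := hp.lt_or_lt j t hjt
    have := hp.le_rev t
    grind
  have hjt_rev : t.rev < j.rev := Fin.rev_lt_rev.2 hjt
  have hoccj : occ (p t) = some j := (hocc _ _).2 ⟨hjt, by grind [spotAt]⟩
  have hfree : occ j.rev = none := by
    refine hocc.apply_eq_none_iff.2 fun c hct hc => ?_
    grind [spotAt]
  have hfirst : ∀ x, p t < x → occ x = none → j.rev ≤ x := by
    intro x htx hx
    by_contra! hxj
    have hxt : x.rev < t := by grind
    refine hocc.apply_eq_none_iff.1 hx x.rev hxt ?_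
    have := hp.lt_or_lt j x.rev
    have := hp.le_rev x.rev
    grind [spotAt]
  refine ⟨_, (mvpStep_eq_some_iff_of_eq_some hoccj).2
    ⟨j.rev, hpt ▸ hjt_rev, hfree, hfirst, rfl⟩, ?_⟩
  have hunmoved : ∀ c < t, c ≠ j → spotAt p (t + 1) c = spotAt p t c := by
    refine fun c hct hcj => spotAt_succ_of_ne fun hc => hcj ?_
    have hoccc : occ (p t) = some c := (hocc _ _).2 ⟨hct, by grind [spotAt]⟩
    exact Option.some_inj.1 (hoccc.symm.trans hoccj)
  have hjrev : spotAt p (t + 1) j = j.rev := by grind [spotAt]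
  rw [← hp.spotAt_succ_self] at hoccj ⊢
  rw [← hjrev] at hfree ⊢
  exact hocc.update_of_bump hoccj hfree hunmoved

theorem mvpOutcome (hp : IsNonCrossPref p) : MVPOutcome p (decPerm n) := by
  have hstep (t : Fin n) (occ : Fin n → Option (Fin n)) (hocc : IsPlacement (spotAt p t) t occ) :
      ∃ occ', mvpStep occ t (p t) = some occ' ∧
        IsPlacement (spotAt p (t + 1)) (t + 1) occ' := by
    by_cases hbump : ∃ j < t, p j = t.rev
    · obtain ⟨j, hjt, hj⟩ := hbump
      exact hp.exists_mvpStep_of_pref_eq_rev hocc hjt hj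
    · exact hp.exists_mvpStep_of_forall_ne hocc (by simpa using hbump)
  obtain ⟨occ, hrun, hocc⟩ := exists_foldlM_eq_some_of_invariant
    (l := List.finRange n) (f := fun occ i => mvpStep occ i (p i)) (a := fun _ => none)
    (P := fun t => IsPlacement (spotAt p t) t) (by simp [IsPlacement])
    (fun t ht occ hocc => by simpa using hstep ⟨t, by simpa using ht⟩ occ hocc)
  refine ⟨occ, hrun, fun x => (hocc _ _).2 ⟨by simp, ?_⟩⟩
  rw [List.length_finRange, spotAt, if_neg (Fin.is_lt _).not_ge]
  exact Fin.rev_rev x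

end IsNonCrossPref

theorem mvpOutcome_decPerm_iff {p : Fin n → Fin n} :
    MVPOutcome p (decPerm n) ↔ IsNonCrossPref p :=
  ⟨fun h => let ⟨_, H⟩ := mvpOutcome_iff_exists_isMVPRun.1 h; H.isNonCrossPref,
    IsNonCrossPref.mvpOutcome⟩

section Decreasing

variable {S : Finset (Fin n × Fin n)}

theorem isNonCrossMatching_iff_isNonCrossPref_subToPF (hS : IsOneSubgraph (decPerm n) S) :
    IsNonCrossMatching S ↔ IsNonCrossPref (subToPF (decPerm n) S) := by
  have hle (c : Fin n) : subToPF (decPerm n) S c ≤ c.rev := by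
    simpa [decPerm] using subToPF_apply_le hS c.rev
  have hmem (j i : Fin n) : (j, i) ∈ S ↔ j < i ∧ subToPF (decPerm n) S i.rev = j :=
    mem_iff_subToPF_eq hS
  rw [isNonCrossMatching_iff_forall_lt_or_lt hS]
  constructor
  · intro hS'
    refine ⟨hle, fun c c' hcc' hc' => ?_⟩
    have harc' : (subToPF (decPerm n) S c', c'.rev) ∈ S := (hmem _ _).2 (by simpa using hc')
    rcases (hle c).lt_or_eq with hc | hc
    · have harc : (subToPF (decPerm n) S c, c.rev) ∈ S := (hmem _ _).2 (by simpa using hc)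
      exact hS' _ _ _ _ harc harc' (Fin.rev_lt_rev.2 hcc')
    · exact Or.inr (hc ▸ Fin.rev_lt_rev.2 hcc')
  · intro hp j i j' i' h h' hlt
    obtain ⟨-, rfl⟩ := (hmem _ _).1 h
    obtain ⟨hlt', rfl⟩ := (hmem _ _).1 h'
    simpa using hp.lt_or_lt i.rev i'.rev (Fin.rev_lt_rev.2 hlt) (by simpa using hlt')

theorem IsNonCrossMatching.isOneSubgraph_decPerm (hS : IsNonCrossMatching S) :
    IsOneSubgraph (decPerm n) S := by
  refine ⟨fun e he => mem_invFinset.2 ⟨hS.1 e he, Fin.rev_lt_rev.2 (hS.1 e he)⟩, ?_⟩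
  intro i j j' h h'
  by_contra hne
  exact (hS.2.1 _ h _ h' (by simp [hne])).2.2.2 rfl

theorem isValid_decPerm_iff (hS : IsOneSubgraph (decPerm n) S) :
    IsValid (decPerm n) S ↔ IsNonCrossMatching S :=
  mvpOutcome_decPerm_iff.trans (isNonCrossMatching_iff_isNonCrossPref_subToPF hS).symm

end Decreasing

/-- for the decreasing permutation `dec_n`, a 1-subgraph is valid
iff it is a non-crossing matching; consequently `Ψ_{Sub→PF}` restricts to a
bijection from `NonCross_n` onto `Fib_n(dec_n)`. -/
theorem statement11 (n : ℕ) :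
    (∀ S : Finset (Fin n × Fin n), IsOneSubgraph (decPerm n) S →
      (IsValid (decPerm n) S ↔ IsNonCrossMatching S)) ∧
    Set.BijOn (subToPF (decPerm n))
      {S : Finset (Fin n × Fin n) | IsNonCrossMatching S}
      (FibMVP (decPerm n)) := by
  refine ⟨fun _ => isValid_decPerm_iff, ?_⟩
  have hset : {S : Finset (Fin n × Fin n) | IsNonCrossMatching S} =
      {S | IsOneSubgraph (decPerm n) S ∧ IsValid (decPerm n) S} :=
    Set.ext fun _ => ⟨fun hS => ⟨hS.isOneSubgraph_decPerm,
      (isValid_decPerm_iff hS.isOneSubgraph_decPerm).2 hS⟩,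
      fun hS => (isValid_decPerm_iff hS.1).1 hS.2⟩
  rw [hset]
  exact bijOn_subToPF (decPerm n)

end MVPPaper
end

section
/- Fix m ≥ 1 and let m' = m+1. For a 1-subgraph S of the inversion graph of τ_{m,2}, let S' be the 1-subgraph of the inversion graph of τ_{m',2} obtained by increasing all vertex labels of S by one and inserting a new isolated vertex labelled 1. Then S ↦ S' is a bijection from the set of valid 1-subgraphs of the inversion graph of τ_{m,2} onto the set of valid 1-subgraphs of the inversion graph of τ_{m',2} in which the vertex 1 is incident to no edge. -/
/- Common definitions: the classical and MVP parking processes, parking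
functions, inversion graphs and 1-subgraphs, Motzkin paths, and sandpile
configurations on complete graphs. Spots, cars and vertices are 0-indexed
(element `i : Fin n` corresponds to the 1-indexed `i+1` of the paper). -/

namespace MVPPaper

open Finset

variable {n : ℕ}

/-! In the process for the shifted subgraph, car `π' 0` prefers the new first spot and no other car
does. It therefore parks there undisturbed, whenever it enters, and every other car moves exactly as
its counterpart does in the process for the original subgraph, one spot further. The condition
`π' i.succ = (π' 0).succAbove (π i)` says that deleting the first letter of `π'` and standardising
gives `π`. -/

/-- The subgraph `S'` obtained from `S` by increasing every vertex by one, which makes the first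
vertex isolated. -/
def shiftEdges (S : Finset (Fin n × Fin n)) : Finset (Fin (n + 1) × Fin (n + 1)) :=
  S.image fun e => (e.1.succ, e.2.succ)

/-- The preference obtained from `p` by inserting a new first spot together with a car `c` that
prefers it; the other cars are relabelled by `c.succAbove` and keep their shifted preferences. -/
def insertPref (c : Fin (n + 1)) (p : Fin n → Fin n) : Fin (n + 1) → Fin (n + 1) :=
  c.insertNth 0 fun k => (p k).succ

/-- The occupancy obtained from `occ` by inserting a new first spot with content `x` and
relabelling the cars by `σ`. -/
def consOcc (σ : Fin n → Fin (n + 1)) (x : Option (Fin (n + 1)))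
    (occ : Fin n → Option (Fin n)) : Fin (n + 1) → Option (Fin (n + 1)) :=
  Fin.cons x fun k => (occ k).map σ

section Parking

variable (σ : Fin n → Fin (n + 1)) (x : Option (Fin (n + 1))) (occ : Fin n → Option (Fin n))

@[simp]
theorem consOcc_zero : consOcc σ x occ 0 = x := rfl

@[simp]
theorem consOcc_succ (k : Fin n) : consOcc σ x occ k.succ = (occ k).map σ := rfl

theorem update_consOcc_zero (y : Option (Fin (n + 1))) :
    Function.update (consOcc σ x occ) 0 y = consOcc σ y occ :=
  Fin.update_cons_zero ..

theorem update_consOcc_succ (k i : Fin n) :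
    Function.update (consOcc σ x occ) k.succ (some (σ i)) =
      consOcc σ x (Function.update occ k (some i)) := by
  simp only [consOcc, ← Fin.cons_update]
  congr 1
  ext1 j
  rcases eq_or_ne j k with rfl | hj <;> simp [*]

theorem firstFree_consOcc (s : Fin n) :
    firstFree (consOcc σ x occ) s.succ = (firstFree occ s).map Fin.succ := by
  rw [firstFree, List.finRange_succ, List.find?_cons_of_neg (by simp), List.find?_map]
  simp [firstFree]

theorem mvpStep_consOcc (i s : Fin n) :
    mvpStep (consOcc σ x occ) (σ i) s.succ = (mvpStep occ i s).map (consOcc σ x) := by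
  cases h : occ s with
  | none => simp [mvpStep, h, update_consOcc_succ]
  | some j =>
    simp [mvpStep, h, update_consOcc_succ, firstFree_consOcc, Function.comp_def]

theorem mvpStep_consOcc_zero (c : Fin (n + 1)) :
    mvpStep (consOcc σ none occ) c 0 = some (consOcc σ (some c) occ) := by
  simp [mvpStep, update_consOcc_zero]

theorem foldlM_mvpStep_consOcc {p : Fin n → Fin n} {p' : Fin (n + 1) → Fin (n + 1)}
    (hp : ∀ i, p' (σ i) = (p i).succ) (cars : List (Fin n)) :
    (cars.map σ).foldlM (fun occ i => mvpStep occ i (p' i)) (consOcc σ x occ) =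
      (cars.foldlM (fun occ i => mvpStep occ i (p i)) occ).map (consOcc σ x) := by
  induction cars generalizing occ with
  | nil => rfl
  | cons i cars ih =>
    simp only [List.map_cons, List.foldlM_cons, hp, mvpStep_consOcc]
    cases mvpStep occ i (p i) with
    | none => rfl
    | some occ₁ => exact ih occ₁

end Parking

theorem finRange_succ_eq_map_succAbove (c : Fin (n + 1)) :
    List.finRange (n + 1) = ((List.finRange n).take c).map c.succAbove ++
      c :: ((List.finRange n).drop c).map c.succAbove := by
  refine List.ext_getElem (by simp; omega) fun i hi hi' => Fin.ext ?_
  have hc : min (c : ℕ) n = c := min_eq_left (Nat.le_of_lt_succ c.is_lt)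
  rcases lt_trichotomy i c with h | rfl | h
  · simp [hc, h, Fin.succAbove, Fin.lt_def]
  · simp [hc]
  · obtain ⟨d, rfl⟩ := Nat.exists_eq_add_of_lt h
    have hd : ¬ (c : ℕ) + d + 1 < c := by omega
    have hsub : (c : ℕ) + d + 1 - c = d + 1 := by omega
    simp [List.getElem_append, hc, hd, hsub, Fin.succAbove, Fin.lt_def]

theorem mvpRun_insertPref (c : Fin (n + 1)) (p : Fin n → Fin n) :
    mvpRun (insertPref c p) = (mvpRun p).map (consOcc c.succAbove (some c)) := by
  have hp (i : Fin n) : insertPref c p (c.succAbove i) = (p i).succ := by simp [insertPref]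
  have hc : insertPref c p c = 0 := by simp [insertPref]
  have hempty : (fun _ => none) = consOcc c.succAbove none fun _ => none :=
    funext (Fin.cases rfl fun _ => rfl)
  rw [mvpRun, runProcess, finRange_succ_eq_map_succAbove c, hempty, List.foldlM_append,
    foldlM_mvpStep_consOcc _ _ _ hp, mvpRun, runProcess]
  conv_rhs => rw [← List.take_append_drop c (List.finRange n), List.foldlM_append]
  cases ((List.finRange n).take c).foldlM (fun occ i => mvpStep occ i (p i)) fun _ => none with
  | none => rfl
  | some occ =>
    simp only [Option.map_some, Option.bind_eq_bind, Option.bind_some, List.foldlM_cons, hc,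
      mvpStep_consOcc_zero]
    exact foldlM_mvpStep_consOcc _ _ _ hp _

theorem subToPF_apply_of_mem {π : Equiv.Perm (Fin n)} {S : Finset (Fin n × Fin n)}
    (hS : IsOneSubgraph π S) {i j : Fin n} (h : (j, i) ∈ S) : subToPF π S (π i) = j := by
  have hex : ∃ j, (j, i) ∈ S := ⟨j, h⟩
  simpa [subToPF, hex] using hS.2 _ _ _ hex.choose_spec h

theorem subToPF_apply_of_forall_notMem (π : Equiv.Perm (Fin n)) {S : Finset (Fin n × Fin n)}
    {i : Fin n} (h : ∀ j, (j, i) ∉ S) : subToPF π S (π i) = i := by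
  simp [subToPF, h]

section ShiftEdges

variable {S : Finset (Fin n × Fin n)}

@[simp]
theorem succ_succ_mem_shiftEdges {i j : Fin n} :
    (j.succ, i.succ) ∈ shiftEdges S ↔ (j, i) ∈ S := by
  simp [shiftEdges]

@[simp]
theorem zero_left_notMem_shiftEdges (i : Fin (n + 1)) : (0, i) ∉ shiftEdges S := by
  simp [shiftEdges]

@[simp]
theorem zero_right_notMem_shiftEdges (j : Fin (n + 1)) : (j, 0) ∉ shiftEdges S := by
  simp [shiftEdges]

theorem shiftEdges_injective : Function.Injective (shiftEdges (n := n)) :=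
  Finset.image_injective ((Fin.succ_injective n).prodMap (Fin.succ_injective n))

theorem mem_range_shiftEdges_iff {S' : Finset (Fin (n + 1) × Fin (n + 1))} :
    S' ∈ Set.range shiftEdges ↔ ∀ e ∈ S', e.1 ≠ 0 ∧ e.2 ≠ 0 := by
  have hrange : S' ∈ Set.range shiftEdges ↔
      (S' : Set _) ⊆ (fun e : Fin n × Fin n => (e.1.succ, e.2.succ)) '' Set.univ := by
    simp only [Finset.subset_set_image_iff, Set.subset_univ, true_and]
    rfl
  rw [hrange, Set.image_univ]
  refine forall₂_congr fun e _ => ?_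
  simp [Prod.ext_iff, ← Fin.exists_succ_eq]

end ShiftEdges

section DeleteFirstLetter

variable {π : Equiv.Perm (Fin n)} {π' : Equiv.Perm (Fin (n + 1))}
  (hπ : ∀ i, π' i.succ = (π' 0).succAbove (π i))
include hπ

theorem mvpOutcome_insertPref_iff (p : Fin n → Fin n) :
    MVPOutcome (insertPref (π' 0) p) π' ↔ MVPOutcome p π := by
  have hocc (occ : Fin n → Option (Fin n)) :
      (∀ i, consOcc (π' 0).succAbove (some (π' 0)) occ i = some (π' i)) ↔
        ∀ i, occ i = some (π i) := by
    simp [Fin.forall_fin_succ, hπ]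
  simp [MVPOutcome, mvpRun_insertPref, Option.map_eq_some_iff, hocc]

theorem succ_succ_mem_invFinset_iff (i j : Fin n) :
    (j.succ, i.succ) ∈ invFinset π' ↔ (j, i) ∈ invFinset π := by
  simp [invFinset, hπ]

theorem isOneSubgraph_shiftEdges_iff (S : Finset (Fin n × Fin n)) :
    IsOneSubgraph π' (shiftEdges S) ↔ IsOneSubgraph π S := by
  refine and_congr ?_ (by simp [Fin.forall_fin_succ])
  exact image_subset_iff.trans <|
    forall₂_congr fun e _ => succ_succ_mem_invFinset_iff hπ e.2 e.1

theorem subToPF_shiftEdges {S : Finset (Fin n × Fin n)} (hS : IsOneSubgraph π S) :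
    subToPF π' (shiftEdges S) = insertPref (π' 0) (subToPF π S) := by
  refine Fin.eq_insertNth_iff.2 ⟨?_, funext <| π.surjective.forall.2 fun i => ?_⟩
  · exact subToPF_apply_of_forall_notMem π' zero_right_notMem_shiftEdges
  · rw [Fin.removeNth_apply, ← hπ]
    by_cases h : ∃ j, (j, i) ∈ S
    · obtain ⟨j, hj⟩ := h
      rw [subToPF_apply_of_mem hS hj]
      exact subToPF_apply_of_mem ((isOneSubgraph_shiftEdges_iff hπ S).2 hS)
        (succ_succ_mem_shiftEdges.2 hj)
    · push Not at h
      rw [subToPF_apply_of_forall_notMem π h]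
      exact subToPF_apply_of_forall_notMem π' (by simp [Fin.forall_fin_succ, h])

theorem isValid_shiftEdges_iff {S : Finset (Fin n × Fin n)} (hS : IsOneSubgraph π S) :
    IsValid π' (shiftEdges S) ↔ IsValid π S := by
  rw [IsValid, IsValid, subToPF_shiftEdges hπ hS, mvpOutcome_insertPref_iff hπ]

end DeleteFirstLetter

theorem statement13_general (π : Equiv.Perm (Fin n)) (π' : Equiv.Perm (Fin (n + 1)))
    (hπ : ∀ i, π' i.succ = (π' 0).succAbove (π i)) :
    Set.BijOn shiftEdges
      {S : Finset (Fin n × Fin n) | IsOneSubgraph π S ∧ IsValid π S}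
      {S' : Finset (Fin (n + 1) × Fin (n + 1)) |
        IsOneSubgraph π' S' ∧ IsValid π' S' ∧ ∀ e ∈ S', e.1 ≠ 0 ∧ e.2 ≠ 0} := by
  have hpre (S : Finset (Fin n × Fin n)) :
      IsOneSubgraph π' (shiftEdges S) ∧ IsValid π' (shiftEdges S) ↔
        IsOneSubgraph π S ∧ IsValid π S := by
    rw [isOneSubgraph_shiftEdges_iff hπ]
    exact and_congr_right (isValid_shiftEdges_iff hπ)
  refine ⟨fun S hS => ?_, shiftEdges_injective.injOn, ?_⟩
  · have ⟨h₁, h₂⟩ := (hpre S).2 hS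
    exact ⟨h₁, h₂, mem_range_shiftEdges_iff.1 ⟨S, rfl⟩⟩
  · rintro S' ⟨h₁, h₂, h₀⟩
    obtain ⟨S, rfl⟩ := mem_range_shiftEdges_iff.2 h₀
    exact ⟨S, (hpre S).1 ⟨h₁, h₂⟩, rfl⟩

theorem completeBipartite_succ_eq_succAbove {m k : ℕ}
    {π : Equiv.Perm (Fin (m + k))} {π' : Equiv.Perm (Fin (m + k + 1))}
    (hπ : ∀ i, (π i : ℕ) = if (i : ℕ) < m then (i : ℕ) + k else (i : ℕ) - m)
    (hπ' : ∀ i, (π' i : ℕ) = if (i : ℕ) < m + 1 then (i : ℕ) + k else (i : ℕ) - (m + 1))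
    (i : Fin (m + k)) : π' i.succ = (π' 0).succAbove (π i) := by
  have h := hπ i
  have h₀ : (π' 0 : ℕ) = k := by simp [hπ']
  ext
  simp only [hπ' i.succ, Fin.succAbove, Fin.lt_def, h₀, Fin.val_succ, Fin.val_castSucc]
  split_ifs at h ⊢ <;> simp only [Fin.val_castSucc, Fin.val_succ] <;> omega

/-- shifting all vertex labels up by one (inserting a new
isolated vertex labelled `0`, i.e. the 1-indexed vertex `1`) is a bijection
from the valid 1-subgraphs for `τ_{m,2}` onto the valid 1-subgraphs for
`τ_{m+1,2}` in which the first vertex is isolated. -/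
theorem statement13 (m : ℕ) (hm : 1 ≤ m)
    (π : Equiv.Perm (Fin (m + 2))) (π' : Equiv.Perm (Fin (m + 2 + 1)))
    (hπ : ∀ i : Fin (m + 2),
      (π i : ℕ) = if (i : ℕ) < m then (i : ℕ) + 2 else (i : ℕ) - m)
    (hπ' : ∀ i : Fin (m + 2 + 1),
      (π' i : ℕ) = if (i : ℕ) < m + 1 then (i : ℕ) + 2 else (i : ℕ) - (m + 1)) :
    Set.BijOn
      (fun S : Finset (Fin (m + 2) × Fin (m + 2)) =>
        S.image fun e => (e.1.succ, e.2.succ))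
      {S : Finset (Fin (m + 2) × Fin (m + 2)) | IsOneSubgraph π S ∧ IsValid π S}
      {S' : Finset (Fin (m + 2 + 1) × Fin (m + 2 + 1)) |
        IsOneSubgraph π' S' ∧ IsValid π' S' ∧ ∀ e ∈ S', e.1 ≠ 0 ∧ e.2 ≠ 0} := by
  exact statement13_general π π' (completeBipartite_succ_eq_succAbove hπ hπ')

end MVPPaper
end

section
/- Let c = (c_1,…,c_n) be a stable sandpile configuration on the complete graph K_n. Then c is recurrent (satisfies Dhar's burning criterion) if and only if the n-complement p = (n − c_1,…, n − c_n) is a parking function. Hence c ↦ n − c is a bijection from the set of recurrent configurations on K_n onto the set of parking functions of length n. -/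
/- Common definitions: the classical and MVP parking processes, parking
functions, inversion graphs and 1-subgraphs, Motzkin paths, and sandpile
configurations on complete graphs. Spots, cars and vertices are 0-indexed
(element `i : Fin n` corresponds to the 1-indexed `i+1` of the paper). -/

namespace MVPPaper

open Finset

variable {n : ℕ}

/-!
Sorting turns the counting condition for parking functions into the existence of an ordering `v` of
the cars with `p (v k) ≤ k` for every `k`. For the `n`-complement `p` of `c` this inequality says
that `v k` is unstable once `v 0, …, v (k - 1)` have toppled, starting from `c + (1, …, 1)`, so the
orderings witnessing that `p` is a parking function are exactly the burning orders of `c`.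
-/

theorem sub_one_sub_lt (c : Fin n → ℕ) (i : Fin n) : n - 1 - c i < n := by
  have := i.isLt
  omega

/-- The `n`-complement of a configuration on `K_n`, whose entry `n - c_i` becomes `n - 1 - c i` with
0-indexed spots. Truncated subtraction sends every unstable vertex to spot `0`. -/
def nComplement (c : Fin n → ℕ) : Fin n → Fin n :=
  fun i => ⟨n - 1 - c i, sub_one_sub_lt c i⟩

theorem nComplement_le_iff (c : Fin n → ℕ) (i k : Fin n) :
    nComplement c i ≤ k ↔ n ≤ c i + k + 1 := by
  simp only [nComplement, Fin.le_def]
  omega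

theorem bijOn_nComplement_stable :
    Set.BijOn nComplement {c : Fin n → ℕ | ∀ i, c i < n} Set.univ := by
  have inv : Set.InvOn (fun (p : Fin n → Fin n) i => ((p i).rev : ℕ)) nComplement
      {c | ∀ i, c i < n} Set.univ := by
    refine ⟨fun c stable => funext fun i => ?_, fun p _ => funext fun i => Fin.ext ?_⟩
    · have := stable i
      simp only [nComplement, Fin.val_rev]
      omega
    · simp only [nComplement, Fin.val_rev]
      omega
  exact inv.bijOn (Set.mapsTo_univ _ _) fun p _ i => (p i).rev.isLt

theorem lt_card_filter_le_iff_sort_le {α : Type*} [LinearOrder α]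
    (f : Fin n → α) (a : α) (k : Fin n) :
    (k : ℕ) < #{i | f i ≤ a} ↔ f (Tuple.sort f k) ≤ a := by
  have card_sort : #{i | f (Tuple.sort f i) ≤ a} = #{i | f i ≤ a} :=
    card_equiv (Tuple.sort f) (by simp)
  rw [← card_sort]
  exact Tuple.lt_card_le_iff_apply_le_of_monotone (Tuple.monotone_sort f)

theorem lt_card_filter_le_of_forall_perm_le {α : Type*} [Preorder α] [DecidableLE α]
    {f b : Fin n → α} (hb : Monotone b) (v : Equiv.Perm (Fin n))
    (hv : ∀ k, f (v k) ≤ b k) (k : Fin n) : (k : ℕ) < #{i | f i ≤ b k} := by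
  have image_subset : (Iic k).map v.toEmbedding ⊆ ({i | f i ≤ b k} : Finset (Fin n)) := by
    intro i hi
    obtain ⟨j, hjk, rfl⟩ := mem_map.mp hi
    exact mem_filter.mpr ⟨mem_univ _, (hv j).trans (hb (mem_Iic.mp hjk))⟩
  simpa using card_le_card image_subset

theorem isParkingFunction_iff_exists_perm_le (p : Fin n → Fin n) :
    IsParkingFunction p ↔ ∃ v : Equiv.Perm (Fin n), ∀ k, p (v k) ≤ k :=
  ⟨fun hp => ⟨Tuple.sort p, fun k => (lt_card_filter_le_iff_sort_le p k k).mp (hp k)⟩,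
    fun ⟨v, hv⟩ => lt_card_filter_le_of_forall_perm_le monotone_id v hv⟩

theorem isRecurrentK_iff_stable_and_isParkingFunction_nComplement (c : Fin n → ℕ) :
    IsRecurrentK c ↔ (∀ i, c i < n) ∧ IsParkingFunction (nComplement c) := by
  simp only [IsRecurrentK, isParkingFunction_iff_exists_perm_le, nComplement_le_iff]

/-- a stable configuration `c` on `K_n` is recurrent iff its
`n`-complement (0-indexed: `i ↦ n - 1 - c i`) is a parking function; hence
`c ↦ n - c` is a bijection from recurrent configurations onto parking
functions of length `n`. -/
theorem statement17 (n : ℕ) :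
    (∀ c : Fin n → ℕ, (∀ i, c i < n) →
      (IsRecurrentK c ↔
        IsParkingFunction
          (fun i : Fin n => (⟨n - 1 - c i, by have := i.isLt; omega⟩ : Fin n)))) ∧
    Set.BijOn
      (fun (c : Fin n → ℕ) (i : Fin n) =>
        (⟨n - 1 - c i, by have := i.isLt; omega⟩ : Fin n))
      {c : Fin n → ℕ | IsRecurrentK c}
      {p : Fin n → Fin n | IsParkingFunction p} := by
  have recurrent_iff := isRecurrentK_iff_stable_and_isParkingFunction_nComplement (n := n)
  have recurrent_eq : {c : Fin n → ℕ | IsRecurrentK c} =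
      {c | ∀ i, c i < n} ∩ nComplement ⁻¹' {p | IsParkingFunction p} :=
    Set.ext recurrent_iff
  refine ⟨fun c stable => (recurrent_iff c).trans (and_iff_right stable), ?_⟩
  rw [recurrent_eq]
  exact bijOn_nComplement_stable.subset_right (Set.subset_univ _)

end MVPPaper
end
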